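/- arXiv:2510.19355 — 2 statements merged into one kernel-verified Lean document; each statement's English description precedes it below -/
import Mathlib

section
/- Let p be a prime number, d ∈ ℕ, M ∈ ℕ with M ≥ 1, and e : ℕ → ℚ a sequence. The following are equivalent: (a) there exist functions a_0,…,a_d : ℕ → ℚ, each periodic with period M (i.e., a_j(n+M) = a_j(n) for all n), such that e_n = a_d(n) p^{dn} + a_{d−1}(n) p^{(d−1)n} + ⋯ + a_0(n) for every n ∈ ℕ; (b) there exists a polynomial P ∈ ℚ[z] with deg P < M(d+1) such that Q·G(e;z) = P in ℚ⟦z⟧, where Q = ∏_{j=0}^d (z^M − 1/p^{jM}) and G(e;z) = ∑_{n≥0} e_n z^n. -/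
/-!
With `N` the degree bound on `P`, the equation `Q · G(e; z) = P` says that the coefficients of
`Q · G(e; z)` vanish from degree `N` on, that is, `e` is killed by the polynomial obtained from `Q`
by reversing its coefficients, evaluated at the shift operator. With `q j = p ^ j` that polynomial
is `∏ j, (1 - (q j ^ M)⁻¹ X ^ M)`; its factors are pairwise coprime, so its kernel is the sum of
their kernels, and a sequence `f` lies in the kernel of the `j`-th factor exactly when
`f n / q j ^ n` is `M`-periodic in `n`.
-/

open Finset Polynomial
open scoped Function PowerSeries

theorem reflect_finset_prod {ι R : Type*} [CommSemiring R] (s : Finset ι) (f : ι → R[X])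
    (N : ι → ℕ) (hf : ∀ i ∈ s, (f i).natDegree ≤ N i) :
    (∏ i ∈ s, f i).reflect (∑ i ∈ s, N i) = ∏ i ∈ s, (f i).reflect (N i) := by
  induction s using Finset.cons_induction with
  | empty => simp
  | cons i s hi ih =>
    obtain ⟨hfi, hfs⟩ := (forall_mem_cons hi _).mp hf
    have hdeg : (∏ j ∈ s, f j).natDegree ≤ ∑ j ∈ s, N j :=
      (natDegree_prod_le s f).trans (sum_le_sum hfs)
    rw [prod_cons, sum_cons, reflect_mul _ _ hfi hdeg, ih hfs, prod_cons]

theorem reflect_X_pow_sub_C {R : Type*} [Ring R] (M : ℕ) (c : R) :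
    (X ^ M - C c).reflect M = 1 - C c * X ^ M := by
  rw [reflect_sub, reflect_monomial, reflect_C, revAt_le le_rfl, Nat.sub_self, pow_zero]

theorem isCoprime_one_sub_mul {R : Type*} [CommRing R] {a b : R} (h : IsUnit (a - b)) (y : R) :
    IsCoprime (1 - a * y) (1 - b * y) := by
  obtain ⟨u, hu⟩ := h.exists_left_inv
  exact ⟨-(u * b), u * a, by linear_combination hu⟩

theorem ker_aeval_finset_prod {ι R V : Type*} [CommRing R] [AddCommGroup V] [Module R V]
    (f : Module.End R V) (s : Finset ι) {q : ι → R[X]}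
    (hq : (s : Set ι).Pairwise (IsCoprime on q)) :
    (aeval f (∏ i ∈ s, q i)).ker = ⨆ i ∈ s, (aeval f (q i)).ker := by
  induction s using Finset.cons_induction with
  | empty => simp [Module.End.one_eq_id]
  | cons i s hi ih =>
    rw [coe_cons] at hq
    have hcop : IsCoprime (q i) (∏ j ∈ s, q j) := IsCoprime.prod_right fun j hj =>
      hq (Set.mem_insert _ _) (Set.mem_insert_of_mem _ hj) (ne_of_mem_of_not_mem hj hi).symm
    simp only [mem_cons, iSup_or, iSup_sup_eq, iSup_iSup_eq_left]
    rw [prod_cons, ← sup_ker_aeval_eq_ker_aeval_mul_of_coprime f hcop,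
      ih (hq.mono (Set.subset_insert _ _))]

/-- The shift operator `(e n)ₙ ↦ (e (n + 1))ₙ` on sequences; evaluating a polynomial at it and
applying the result to `e` expresses a linear recurrence for `e` with constant coefficients. -/
def sequenceShift (R : Type*) [Semiring R] : Module.End R (ℕ → R) :=
  LinearMap.funLeft R R (· + 1)

theorem sequenceShift_pow_apply {R : Type*} [Semiring R] (k : ℕ) (e : ℕ → R) (n : ℕ) :
    (sequenceShift R ^ k) e n = e (n + k) := by
  induction k generalizing n with
  | zero => rfl
  | succ k ih =>
    rw [pow_succ', Module.End.mul_apply, sequenceShift, LinearMap.funLeft_apply, ← sequenceShift,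
      ih, add_right_comm, add_assoc]

theorem coeff_coe_mul_mk {R : Type*} [CommSemiring R] {Q : R[X]} {N : ℕ} (hQ : Q.natDegree ≤ N)
    (e : ℕ → R) (n : ℕ) :
    PowerSeries.coeff (n + N) ((Q : R⟦X⟧) * PowerSeries.mk e) =
      aeval (sequenceShift R) (Q.reflect N) e n := by
  refine induction_with_natDegree_le (fun Q => PowerSeries.coeff (n + N)
    ((Q : R⟦X⟧) * PowerSeries.mk e) = aeval (sequenceShift R) (Q.reflect N) e n) N
    (by simp) (fun k c _ hk => ?_) (fun f g _ _ hf hg => ?_) Q hQ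
  · obtain ⟨m, rfl⟩ := Nat.exists_eq_add_of_le' hk
    rw [reflect_C_mul_X_pow, revAt_le hk, Nat.add_sub_cancel, Polynomial.coe_mul,
      Polynomial.coe_pow, Polynomial.coe_C, Polynomial.coe_X, mul_assoc, PowerSeries.coeff_C_mul,
      ← add_assoc, PowerSeries.coeff_X_pow_mul, PowerSeries.coeff_mk]
    simp [sequenceShift_pow_apply]
  · rw [reflect_add, map_add, LinearMap.add_apply, Pi.add_apply, ← hf, ← hg, Polynomial.coe_add,
      add_mul, map_add]

theorem exists_coe_eq_iff_forall_coeff_eq_zero {R : Type*} [Semiring R] (N : ℕ) (f : R⟦X⟧) :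
    (∃ P : R[X], P.degree < N ∧ f = P) ↔ ∀ n, PowerSeries.coeff (n + N) f = 0 := by
  constructor
  · rintro ⟨P, hP, rfl⟩ n
    rw [Polynomial.coeff_coe]
    exact coeff_eq_zero_of_degree_lt (hP.trans_le (mod_cast Nat.le_add_left N n))
  · intro h
    refine ⟨PowerSeries.trunc N f, PowerSeries.degree_trunc_lt f N, ?_⟩
    have hshift : PowerSeries.mk (fun n => PowerSeries.coeff (n + N) f) = 0 := by
      ext n
      rw [PowerSeries.coeff_mk, h, map_zero]
    simpa only [hshift, zero_mul, zero_add] using PowerSeries.eq_shift_mul_X_pow_add_trunc N f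

theorem exists_coe_mul_mk_eq_iff_mem_ker {R : Type*} [CommSemiring R] {Q : R[X]} {N : ℕ}
    (hQ : Q.natDegree ≤ N) (e : ℕ → R) :
    (∃ P : R[X], P.degree < N ∧ (Q : R⟦X⟧) * PowerSeries.mk e = P) ↔
      e ∈ (aeval (sequenceShift R) (Q.reflect N)).ker := by
  simp only [exists_coe_eq_iff_forall_coeff_eq_zero, coeff_coe_mul_mk hQ, LinearMap.mem_ker,
    funext_iff, Pi.zero_apply]

theorem mem_ker_aeval_sequenceShift_iff {K : Type*} [Field K] {q : K} (hq : q ≠ 0) (M : ℕ)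
    (e : ℕ → K) :
    e ∈ (aeval (sequenceShift K) (1 - C (1 / q ^ M) * X ^ M)).ker ↔
      ∃ a : ℕ → K, a.Periodic M ∧ ∀ n, e n = a n * q ^ n := by
  have hrec : e ∈ (aeval (sequenceShift K) (1 - C (1 / q ^ M) * X ^ M)).ker ↔
      ∀ n, e (n + M) = e n * q ^ M := by
    simp only [LinearMap.mem_ker, map_sub, map_one, map_mul, aeval_C, aeval_X_pow,
      LinearMap.sub_apply, Module.End.one_apply, Module.End.mul_apply,
      Module.algebraMap_end_apply, funext_iff, Pi.smul_apply,
      sequenceShift_pow_apply, smul_eq_mul, sub_eq_zero, one_div,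
      eq_inv_mul_iff_mul_eq₀ (pow_ne_zero M hq)]
    exact forall_congr' fun n => by rw [eq_comm, mul_comm]
  rw [hrec]
  constructor
  · intro h
    refine ⟨fun n => e n / q ^ n, fun n => ?_, fun n => by field_simp⟩
    simp only [h n, pow_add]
    field_simp
  · rintro ⟨a, ha, he⟩ n
    rw [he, he, ha, pow_add, mul_assoc]

theorem quasiPolynomial_in_p_pow_iff_genSeries_general {ι K : Type*} [Fintype ι] [Field K]
    (q : ι → K) (hq : ∀ i, q i ≠ 0) (M : ℕ) (hqM : Function.Injective fun i => q i ^ M)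
    (e : ℕ → K) :
    (∃ a : ι → ℕ → K, (∀ i, (a i).Periodic M) ∧ ∀ n, e n = ∑ i, a i n * q i ^ n) ↔
      ∃ P : K[X], P.degree < (M * Fintype.card ι : ℕ) ∧
        ((∏ i, (X ^ M - C (1 / q i ^ M)) : K[X]) : K⟦X⟧) * PowerSeries.mk e = P := by
  have hdeg (i : ι) : (X ^ M - C (1 / q i ^ M)).natDegree ≤ M := natDegree_X_pow_sub_C.le
  have hN : M * Fintype.card ι = ∑ _i : ι, M := by simp [mul_comm]
  have hcop : ((univ : Finset ι) : Set ι).Pairwise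
      (IsCoprime on fun i => 1 - C (1 / q i ^ M) * X ^ M) := fun i _ j _ hij => by
    refine isCoprime_one_sub_mul ?_ _
    rw [← C_sub, isUnit_C, isUnit_iff_ne_zero, sub_ne_zero]
    simpa using hqM.ne hij
  rw [hN, exists_coe_mul_mk_eq_iff_mem_ker
      ((natDegree_prod_le _ _).trans (sum_le_sum fun i _ => hdeg i)),
    reflect_finset_prod _ _ _ fun i _ => hdeg i]
  simp only [reflect_X_pow_sub_C]
  rw [ker_aeval_finset_prod _ _ hcop, Submodule.mem_iSup_finset_iff_exists_sum]
  constructor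
  · rintro ⟨a, ha, he⟩
    exact ⟨fun i => ⟨fun n => a i n * q i ^ n,
      (mem_ker_aeval_sequenceShift_iff (hq i) M _).mpr ⟨a i, ha i, fun _ => rfl⟩⟩,
      funext fun n => by simp [he]⟩
  · rintro ⟨f, rfl⟩
    choose a ha hfa using fun i => (mem_ker_aeval_sequenceShift_iff (hq i) M _).mp (f i).2
    exact ⟨a, ha, fun n => by simp [hfa]⟩

/-- **Theorem 2.7.** Let `p` be a prime, `d ∈ ℕ`, `M ≥ 1` and `e : ℕ → ℚ`.  Then
`eₙ = a_d(n) p^{dn} + ⋯ + a₀(n)` with each `a_j : ℕ → ℚ` periodic of period `M`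
if and only if `Q · G(e;z) = P` in `ℚ⟦z⟧`, where
`Q = ∏_{j=0}^d (z^M - 1/p^{jM})` and `deg P < M(d + 1)`. -/
theorem quasiPolynomial_in_p_pow_iff_genSeries (p : ℕ) (hp : p.Prime) (d M : ℕ)
    (hM : 1 ≤ M) (e : ℕ → ℚ) :
    (∃ a : Fin (d + 1) → ℕ → ℚ, (∀ j, ∀ n : ℕ, a j (n + M) = a j n) ∧
      ∀ n : ℕ, e n = ∑ j, a j n * (p : ℚ) ^ ((j : ℕ) * n)) ↔
    (∃ P : Polynomial ℚ, P.degree < (M * (d + 1) : ℕ) ∧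
      ((∏ j ∈ Finset.range (d + 1),
          (Polynomial.X ^ M - Polynomial.C ((1 : ℚ) / (p : ℚ) ^ (j * M))) : Polynomial ℚ) :
          PowerSeries ℚ) * PowerSeries.mk e = (P : PowerSeries ℚ)) := by
  have hp1 : (1 : ℚ) < (p : ℚ) ^ M := one_lt_pow₀ (mod_cast hp.one_lt) (Nat.ne_of_gt hM)
  have hpM : Function.Injective fun j : Fin (d + 1) => ((p : ℚ) ^ (j : ℕ)) ^ M := by
    simpa only [pow_right_comm _ _ M, Function.comp_def] using
      (pow_right_injective₀ (zero_lt_one.trans hp1) hp1.ne').comp Fin.val_injective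
  simpa [← pow_mul, prod_range, Function.Periodic] using
    quasiPolynomial_in_p_pow_iff_genSeries_general (fun j : Fin (d + 1) => (p : ℚ) ^ (j : ℕ))
      (fun _ => pow_ne_zero _ (mod_cast hp.ne_zero)) M hpM e
end

section
/- Let p be a prime, let ℓ ≤ d be natural numbers, let a_ℓ,…,a_d ∈ ℚ be nonzero, let α be a real number with α < ℓ, and let e : ℕ → ℚ satisfy e_n = a_d p^{dn} + a_{d−1} p^{(d−1)n} + ⋯ + a_ℓ p^{ℓn} + f_n, where there is a constant C > 0 with |f_n| ≤ C·p^{αn} for all n ∈ ℕ. Then there exists a function g : ℂ → ℂ which is differentiable (holomorphic) on the open ball {z ∈ ℂ : |z| < p^{−α}} such that for every z ∈ ℂ with |z| < p^{−d} one has ∑_{n≥0} e_n z^n = ∑_{i=ℓ}^d (−a_i p^{−i})/(z − p^{−i}) + g(z). In particular, for each ℓ ≤ i ≤ d, the residue of the meromorphic function ∑ e_n z^n at z = 1/p^i equals −a_i p^{−i}. -/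
/-!
For `‖w z‖ < 1` the geometric series `∑ a wⁿ zⁿ` sums to `a / (1 - w z)`, a simple pole at `w⁻¹`
with residue `-a w⁻¹`; take `w = pⁱ` for each term `aᵢ p^{in}` of `eₙ`. The remainder
`∑ fₙ zⁿ` has radius of convergence at least `p^{-α}`, so its sum is holomorphic on that ball.
-/

open Metric
open scoped NNReal

section PowerSeries

open FormalMultilinearSeries

variable {𝕜 E : Type*} [NontriviallyNormedField 𝕜] [NormedRing E] [NormOneClass E]
  [NormedAlgebra 𝕜 E] {c : ℕ → 𝕜} {r : ℝ≥0} {C : ℝ}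

theorem le_radius_ofScalars_of_bound (hc : ∀ n, ‖c n‖ * (r : ℝ) ^ n ≤ C) :
    (r : ENNReal) ≤ (ofScalars E c).radius :=
  le_radius_of_bound _ C fun n ↦ by simpa only [ofScalars_norm] using hc n

variable [CompleteSpace E]

theorem summable_smul_pow_of_bound (hc : ∀ n, ‖c n‖ * (r : ℝ) ^ n ≤ C) {z : E} (hz : ‖z‖ < r) :
    Summable fun n ↦ c n • z ^ n := by
  have hmem : z ∈ eball (0 : E) (ofScalars E c).radius :=
    eball_subset_eball (le_radius_ofScalars_of_bound hc)
      (by simpa only [eball_coe, mem_ball_zero_iff] using hz)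
  simpa only [ofScalars_apply_eq] using (ofScalars E c).summable hmem

theorem differentiableOn_tsum_smul_pow_of_bound (hc : ∀ n, ‖c n‖ * (r : ℝ) ^ n ≤ C) :
    DifferentiableOn 𝕜 (fun z : E ↦ ∑' n, c n • z ^ n) (ball 0 r) := by
  rw [← ofScalarsSum_eq_tsum, ← eball_coe]
  exact (ofScalars E c).analyticOnNhd.differentiableOn.mono
    (eball_subset_eball (le_radius_ofScalars_of_bound hc))

end PowerSeries

theorem neg_mul_inv_div_sub_inv {K : Type*} [Field K] {w : K} (hw : w ≠ 0) (a z : K) :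
    -a * w⁻¹ / (z - w⁻¹) = a * (1 - w * z)⁻¹ := by
  have hfactor : 1 - w * z = -w * (z - w⁻¹) := by
    rw [neg_mul, mul_sub, mul_inv_cancel₀ hw, neg_sub]
  rw [hfactor, mul_inv, inv_neg, div_eq_mul_inv]
  ring

section PartialFractions

variable {𝕜 : Type*} [NormedField 𝕜]

theorem hasSum_geometric_partialFraction {w z : 𝕜} (hw : w ≠ 0) (a : 𝕜) (hz : ‖w * z‖ < 1) :
    HasSum (fun n : ℕ ↦ a * w ^ n * z ^ n) (-a * w⁻¹ / (z - w⁻¹)) := by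
  simpa only [neg_mul_inv_div_sub_inv hw, mul_pow, mul_assoc] using
    (hasSum_geometric_of_norm_lt_one hz).mul_left a

theorem hasSum_sum_geometric_add {ι : Type*} {s : Finset ι} {a w : ι → 𝕜} {e f : ℕ → 𝕜} {z : 𝕜}
    (he : ∀ n, e n = ∑ i ∈ s, a i * w i ^ n + f n) (hw : ∀ i ∈ s, w i ≠ 0)
    (hz : ∀ i ∈ s, ‖w i * z‖ < 1) (hf : Summable fun n ↦ f n * z ^ n) :
    HasSum (fun n ↦ e n * z ^ n)
      (∑ i ∈ s, -a i * (w i)⁻¹ / (z - (w i)⁻¹) + ∑' n, f n * z ^ n) := by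
  simpa only [he, add_mul, Finset.sum_mul] using
    (hasSum_sum fun i hi ↦ hasSum_geometric_partialFraction (hw i hi) (a i) (hz i hi)).add
      hf.hasSum

end PartialFractions

theorem mul_rpow_neg_pow_le {b x C α : ℝ} {n : ℕ} (hb : 0 < b) (hx : x ≤ C * b ^ (α * n)) :
    x * (b ^ (-α)) ^ n ≤ C := by
  rwa [Real.rpow_neg hb.le, inv_pow, ← div_eq_mul_inv, div_le_iff₀ (by positivity),
    ← Real.rpow_mul_natCast hb.le]

theorem norm_pow_mul_lt_one {𝕜 : Type*} [NormedDivisionRing 𝕜] {q z : 𝕜} {i d : ℕ}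
    (hq : 1 ≤ ‖q‖) (hid : i ≤ d) (hz : ‖z‖ < ‖q‖ ^ (-(d : ℝ))) : ‖q ^ i * z‖ < 1 := by
  have hq₀ : 0 < ‖q‖ := one_pos.trans_le hq
  rw [Real.rpow_neg hq₀.le, Real.rpow_natCast, ← one_div, lt_div_iff₀' (by positivity)] at hz
  calc ‖q ^ i * z‖ = ‖q‖ ^ i * ‖z‖ := by rw [norm_mul, norm_pow]
    _ ≤ ‖q‖ ^ d * ‖z‖ := by gcongr
    _ < 1 := hz

theorem genSeries_partial_fraction_decomposition_general {𝕜 : Type*} [NontriviallyNormedField 𝕜]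
    [CompleteSpace 𝕜] {q : 𝕜} (hq : 1 ≤ ‖q‖) {ℓ d : ℕ} {α : ℝ} (hα : α ≤ d)
    {a f e : ℕ → 𝕜} {C : ℝ} (hf : ∀ n : ℕ, ‖f n‖ ≤ C * ‖q‖ ^ (α * n))
    (he : ∀ n : ℕ, e n = ∑ i ∈ Finset.Icc ℓ d, a i * q ^ (i * n) + f n) :
    ∃ g : 𝕜 → 𝕜, DifferentiableOn 𝕜 g (ball 0 (‖q‖ ^ (-α))) ∧
      ∀ z : 𝕜, ‖z‖ < ‖q‖ ^ (-(d : ℝ)) →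
        HasSum (fun n : ℕ ↦ e n * z ^ n)
          (∑ i ∈ Finset.Icc ℓ d, -a i * (q ^ i)⁻¹ / (z - (q ^ i)⁻¹) + g z) := by
  have hq₀ : 0 < ‖q‖ := one_pos.trans_le hq
  have hbound (n : ℕ) : ‖f n‖ * ((‖q‖₊ ^ (-α) : ℝ≥0) : ℝ) ^ n ≤ C := mul_rpow_neg_pow_le hq₀ (hf n)
  refine ⟨fun z ↦ ∑' n, f n * z ^ n, differentiableOn_tsum_smul_pow_of_bound hbound, fun z hz ↦ ?_⟩
  have hzα : ‖z‖ < ‖q‖ ^ (-α) :=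
    hz.trans_le (Real.rpow_le_rpow_of_exponent_le hq (neg_le_neg hα))
  exact hasSum_sum_geometric_add (by simpa only [pow_mul] using he)
    (fun i _ ↦ pow_ne_zero i (norm_pos_iff.1 hq₀))
    (fun i hi ↦ norm_pow_mul_lt_one hq (Finset.mem_Icc.1 hi).2 hz)
    (summable_smul_pow_of_bound hbound hzα)

/-- **Corollary 2.9.** Let `p` be a prime, `ℓ ≤ d`, `a_ℓ, …, a_d ∈ ℚ` nonzero, `α < ℓ`
real, and `e : ℕ → ℚ` with `eₙ = ∑_{i=ℓ}^d aᵢ p^{in} + fₙ` where `|fₙ| ≤ C·p^{αn}`.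
Then there is a function `g` holomorphic on the ball `‖z‖ < p^{-α}` such that for all
`z` with `‖z‖ < p^{-d}` one has
`∑ eₙ zⁿ = ∑_{i=ℓ}^d (-aᵢ p^{-i})/(z - p^{-i}) + g(z)`;  in particular the residue
of `∑ eₙ zⁿ` at `z = 1/pⁱ` equals `-aᵢ p^{-i}` for `ℓ ≤ i ≤ d`. -/
theorem genSeries_partial_fraction_decomposition (p : ℕ) (hp : p.Prime) (ℓ d : ℕ)
    (hld : ℓ ≤ d) (α : ℝ) (hα : α < (ℓ : ℝ)) (a : ℕ → ℚ)
    (ha : ∀ i, ℓ ≤ i → i ≤ d → a i ≠ 0) (f : ℕ → ℚ) (C : ℝ) (hC : 0 < C)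
    (hf : ∀ n : ℕ, |(f n : ℝ)| ≤ C * (p : ℝ) ^ (α * n)) (e : ℕ → ℚ)
    (he : ∀ n : ℕ, e n = ∑ i ∈ Finset.Icc ℓ d, a i * (p : ℚ) ^ (i * n) + f n) :
    ∃ g : ℂ → ℂ, DifferentiableOn ℂ g (Metric.ball 0 ((p : ℝ) ^ (-α))) ∧
      ∀ z : ℂ, ‖z‖ < (p : ℝ) ^ (-(d : ℝ)) →
        ∑' n : ℕ, (e n : ℂ) * z ^ n =
          ∑ i ∈ Finset.Icc ℓ d,
            (-(a i : ℂ) * ((p : ℂ) ^ i)⁻¹) / (z - ((p : ℂ) ^ i)⁻¹) + g z := by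
  obtain ⟨g, hg, hsum⟩ := genSeries_partial_fraction_decomposition_general (q := (p : ℂ))
    (ℓ := ℓ) (a := fun i ↦ a i) (f := fun n ↦ f n) (e := fun n ↦ e n) (by simpa using hp.one_le)
    (hα.le.trans (Nat.cast_le.2 hld)) (by simpa using hf) (fun n ↦ by simp [he n])
  exact ⟨g, by simpa using hg, fun z hz ↦ (hsum z (by simpa using hz)).tsum_eq⟩
end
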